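/- Let (X,d,𝔪) be a PI space with 𝔪(X) = ∞, and let E ⊂ X be an indecomposable set. Then sat(E) is indecomposable and saturated; in particular, sat(sat(E)) = sat(E). -/

import Mathlib

open MeasureTheory Metric Filter Set ENNReal NNReal Topology

/-- A curve: a rectifiable continuous map from a compact interval into `X`,
parametrized by arc length (hence `1`-Lipschitz on `[0, len]`). -/
structure Curve (X : Type*) [MetricSpace X] where
  len : ℝ
  len_nonneg : 0 ≤ len
  toFun : ℝ → X
  lipschitzOn : LipschitzOnWith 1 toFun (Set.Icc 0 len)

namespace Curve

variable {X : Type*} [MetricSpace X]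

/-- A curve is nonconstant if it attains two distinct values. -/
def IsNonconstant (γ : Curve X) : Prop :=
  ∃ s ∈ Set.Icc (0:ℝ) γ.len, ∃ t ∈ Set.Icc (0:ℝ) γ.len, γ.toFun s ≠ γ.toFun t

/-- A curve lies in a set `W`. -/
def IsIn (γ : Curve X) (W : Set X) : Prop :=
  ∀ s ∈ Set.Icc (0:ℝ) γ.len, γ.toFun s ∈ W

end Curve

variable {X : Type*} [MetricSpace X] [MeasurableSpace X] [BorelSpace X]

/-- The curve integral `∫_γ g ds` for an arc-length parametrized curve. -/
noncomputable def curveLintegral (g : X → ℝ≥0∞) (γ : Curve X) : ℝ≥0∞ :=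
  ∫⁻ s in Set.Icc (0:ℝ) γ.len, g (γ.toFun s)

/-- The upper gradient inequality `|u(x) - u(y)| ≤ ∫_γ g ds` along a curve `γ`
with endpoints `x, y`. -/
def UpperGradIneq (g : X → ℝ≥0∞) (u : X → ℝ) (γ : Curve X) : Prop :=
  ENNReal.ofReal |u (γ.toFun 0) - u (γ.toFun γ.len)| ≤ curveLintegral g γ

/-- The 1-modulus of a family of curves. -/
noncomputable def mod1 (μ : Measure X) (Γ : Set (Curve X)) : ℝ≥0∞ :=
  ⨅ (ρ : X → ℝ≥0∞) (_ : Measurable ρ ∧ ∀ γ ∈ Γ, 1 ≤ curveLintegral ρ γ),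
    ∫⁻ x, ρ x ∂μ

/-- `g` is a 1-weak upper gradient of `u` in `W`: the upper gradient inequality
holds for all nonconstant curves in `W` outside a family of 1-modulus zero. -/
def IsWeakUpperGradientOn (μ : Measure X) (g : X → ℝ≥0∞) (u : X → ℝ) (W : Set X) : Prop :=
  Measurable g ∧
    mod1 μ {γ : Curve X | γ.IsNonconstant ∧ γ.IsIn W ∧ ¬ UpperGradIneq g u γ} = 0

/-- `g` is a (strong) upper gradient of `u` in `X`. -/
def IsUpperGradient (g : X → ℝ≥0∞) (u : X → ℝ) : Prop :=
  Measurable g ∧ ∀ γ : Curve X, γ.IsNonconstant → UpperGradIneq g u γ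

/-- `∫_W g_u dμ`: the integral over `W` of the minimal 1-weak upper gradient of `u`
in `W`, equivalently the infimum of `∫_W g dμ` over all 1-weak upper gradients `g`
of `u` in `W`. -/
noncomputable def gradEnergy (μ : Measure X) (u : X → ℝ) (W : Set X) : ℝ≥0∞ :=
  ⨅ (g : X → ℝ≥0∞) (_ : IsWeakUpperGradientOn μ g u W), ∫⁻ x in W, g x ∂μ

/-- `u` is locally Lipschitz on `W`. -/
def LocLipschitzOn (u : X → ℝ) (W : Set X) : Prop :=
  ∀ x ∈ W, ∃ K : ℝ≥0, ∃ t ∈ nhdsWithin x W, LipschitzOnWith K u t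

/-- Convergence `uᵢ → v` in `L¹_loc(W)`. -/
def TendstoL1loc (μ : Measure X) (W : Set X) (u : ℕ → X → ℝ) (v : X → ℝ) : Prop :=
  ∀ W' : Set X, IsOpen W' → IsCompact (closure W') → closure W' ⊆ W →
    Tendsto (fun i => ∫⁻ x in W', ENNReal.ofReal |u i x - v x| ∂μ) atTop (𝓝 0)

/-- The total variation `‖Dv‖(W)` of a function `v` in an open set `W`. -/
noncomputable def variationOn (μ : Measure X) (v : X → ℝ) (W : Set X) : ℝ≥0∞ :=
  ⨅ (u : ℕ → X → ℝ) (_ : (∀ i, LocLipschitzOn (u i) W) ∧ TendstoL1loc μ W u v),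
    Filter.liminf (fun i => gradEnergy μ (u i) W) Filter.atTop

/-- The total variation `‖Dv‖(A)` of a function `v` in an arbitrary set `A`. -/
noncomputable def totalVar (μ : Measure X) (v : X → ℝ) (A : Set X) : ℝ≥0∞ :=
  ⨅ (W : Set X) (_ : IsOpen W ∧ A ⊆ W), variationOn μ v W

/-- The perimeter `P(E, A) = ‖Dχ_E‖(A)`. -/
noncomputable def perimeter (μ : Measure X) (E A : Set X) : ℝ≥0∞ :=
  totalVar μ (Set.indicator E fun _ => (1 : ℝ)) A

/-- The measure `μ` is doubling. -/
def IsDoublingMeasure (μ : Measure X) : Prop :=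
  ∃ C : ℝ≥0∞, 1 ≤ C ∧ ∀ (x : X) (r : ℝ), 0 < r → μ (ball x (2 * r)) ≤ C * μ (ball x r)

/-- The space supports a (1,1)-Poincaré inequality:
`⨍_{B(x,r)} |u - u_{B(x,r)}| dμ ≤ C r ⨍_{B(x,λr)} g dμ` for every ball, every
`u ∈ L¹_loc(X)` and every upper gradient `g` of `u` (stated here multiplied
through by the measures of the two balls). -/
def SupportsPoincare (μ : Measure X) : Prop :=
  ∃ C lam : ℝ, 0 < C ∧ 1 ≤ lam ∧
    ∀ (x : X) (r : ℝ), 0 < r → ∀ (u : X → ℝ) (g : X → ℝ≥0∞),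
      (∀ (y : X) (s : ℝ), IntegrableOn u (ball y s) μ) → IsUpperGradient g u →
        μ (ball x (lam * r)) *
            ∫⁻ y in ball x r, ENNReal.ofReal |u y - ⨍ z in ball x r, u z ∂μ| ∂μ ≤
          ENNReal.ofReal (C * r) * μ (ball x r) * ∫⁻ y in ball x (lam * r), g y ∂μ

/-- `(X, d, μ)` is a PI space: complete, doubling, supporting a (1,1)-Poincaré
inequality. -/
def IsPISpace (μ : Measure X) : Prop :=
  CompleteSpace X ∧ IsDoublingMeasure μ ∧ SupportsPoincare μ

/-- A set `E` of finite perimeter is decomposable in a Borel set `D` if there is a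
partition `{F, G}` of `E ∩ D` into sets of finite perimeter in `D`, both of positive
measure, with `P(E,D) = P(F,D) + P(G,D)`. -/
def IsDecomposableIn (μ : Measure X) (E D : Set X) : Prop :=
  ∃ F G : Set X, MeasurableSet F ∧ MeasurableSet G ∧ Disjoint F G ∧ F ∪ G = E ∩ D ∧
    perimeter μ F D < ⊤ ∧ perimeter μ G D < ⊤ ∧ 0 < μ F ∧ 0 < μ G ∧
    perimeter μ E D = perimeter μ F D + perimeter μ G D

/-- `E` is indecomposable in `D`. -/
def IsIndecomposableIn (μ : Measure X) (E D : Set X) : Prop :=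
  ¬ IsDecomposableIn μ E D

/-- `{F i}_{i ∈ I}` is a (finite or countable) partition of `E` into indecomposable
Borel sets of positive measure and finite perimeter whose perimeters sum to `P(E,X)`;
this is the defining property of the essential connected components `𝒞𝒞ᵉ(E)`. -/
def IsEssentialPartition (μ : Measure X) (E : Set X) (I : Set ℕ) (F : ℕ → Set X) : Prop :=
  (∀ i ∈ I, MeasurableSet (F i)) ∧
  (∀ i ∈ I, ∀ j ∈ I, i ≠ j → Disjoint (F i) (F j)) ∧
  (⋃ i ∈ I, F i) = E ∧
  (∀ i ∈ I, 0 < μ (F i)) ∧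
  (∀ i ∈ I, perimeter μ (F i) Set.univ < ⊤) ∧
  (∀ i ∈ I, IsIndecomposableIn μ (F i) Set.univ) ∧
  perimeter μ E Set.univ = ∑' i : I, perimeter μ (F i.1) Set.univ

/-- Given a decomposition `{G i}_{i ∈ I}` of `X ∖ E` into essential connected
components, the saturation of `E`: the union of `E` and its holes, i.e. the
components of finite measure. -/
def saturationOf (μ : Measure X) (E : Set X) (I : Set ℕ) (G : ℕ → Set X) : Set X :=
  E ∪ ⋃ (i : ℕ) (_ : i ∈ I ∧ μ (G i) < ⊤), G i

/-- The measure-theoretic boundary `∂* E`: points where both `E` and its complement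
have strictly positive upper density. -/
def mtBoundary (μ : Measure X) (E : Set X) : Set X :=
  {x : X |
    0 < Filter.limsup (fun r => μ (ball x r ∩ E) / μ (ball x r)) (nhdsWithin 0 (Set.Ioi 0)) ∧
    0 < Filter.limsup (fun r => μ (ball x r \ E) / μ (ball x r)) (nhdsWithin 0 (Set.Ioi 0))}

/-- The restricted codimension-one Hausdorff content `ℋ_R`. -/
noncomputable def codimOneContent (μ : Measure X) (R : ℝ) (A : Set X) : ℝ≥0∞ :=
  ⨅ (s : Set (X × ℝ))
    (_ : s.Countable ∧ (∀ p ∈ s, 0 < p.2 ∧ p.2 ≤ R) ∧ A ⊆ ⋃ p ∈ s, ball p.1 p.2),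
    ∑' p : s, μ (ball (p : X × ℝ).1 (p : X × ℝ).2) / ENNReal.ofReal (p : X × ℝ).2

/-- The codimension-one Hausdorff measure `ℋ(A) = lim_{R → 0} ℋ_R(A)`. -/
noncomputable def codimOneHausdorff (μ : Measure X) (A : Set X) : ℝ≥0∞ :=
  ⨆ (R : ℝ) (_ : 0 < R), codimOneContent μ R A

/-!
The perimeter is submodular: `P(A ∪ B) + P(A ∩ B) ≤ P(A) + P(B)`. Indeed, gluing upper gradients of
`u` and `v` along `{v ≤ u}` gives an upper gradient of `max u v`, the complementary gluing gives one
of `min u v`, and the two glued functions have the same sum as the original ones.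

By submodularity, a partition on which the perimeter is additive restricts to a partition of the
same kind of every subset of finite perimeter. Hence an indecomposable subset lies, up to a null
set, in one of the two parts. If `sat(E)` had such a partition with both parts of positive measure,
then, up to null sets, one part would contain `E` and the other a hole `G`, so that
`P(E ∪ G) = P(E) + P(G)`. But `G` is an essential component of the complement of `E`, so
`P(E) = P(E ∪ G) + P(G)`. Therefore `P(G) = 0`, and by the Poincaré inequality `G` is null or
conull, which is absurd.

Every essential component of the complement of `sat(E)` contains, up to a null set, one of the
components of the complement of `E` which are not holes, and so it has infinite measure.
-/

section RealAnalysis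

theorem ae_norm_deriv_le_of_norm_sub_le_integral {E F : Type*} [NormedAddCommGroup E]
    [NormedSpace ℝ E] [NormedAddCommGroup F] [NormedSpace ℝ F] [CompleteSpace F] {f : ℝ → E}
    {G : ℝ → F} {a b : ℝ} (hG : IntervalIntegrable G volume a b)
    (hf : ∀ s ∈ uIcc a b, ∀ t ∈ uIcc a b, ‖f t - f s‖ ≤ ‖∫ r in s..t, G r‖) :
    ∀ᵐ t, t ∈ uIcc a b → ‖deriv f t‖ ≤ ‖G t‖ := by
  filter_upwards [hG.ae_hasDerivAt_integral, Measure.ae_ne volume (min a b),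
    Measure.ae_ne volume (max a b)] with t hderiv hmin hmax ht
  have hnhds : uIcc a b ∈ 𝓝 t :=
    Icc_mem_nhds (ht.1.lt_of_ne hmin.symm) (ht.2.lt_of_ne hmax)
  refine le_of_forall_gt_imp_ge_of_dense fun C hC => ?_
  have hslope : ∀ᶠ s in 𝓝[≠] t, ‖s - t‖⁻¹ * ‖∫ r in t..s, G r‖ < C := by
    simpa using (hderiv ht t ht).hasDerivWithinAt.limsup_norm_slope_le hC
  refine norm_deriv_le_of_lip' ((norm_nonneg _).trans hC.le) ?_
  filter_upwards [hnhds, eventually_nhdsWithin_iff.1 hslope] with s hs hslope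
  rcases eq_or_ne s t with rfl | hst
  · simp
  · rw [← div_le_iff₀ (norm_pos_iff.2 (sub_ne_zero.2 hst)), div_eq_inv_mul]
    exact (mul_le_mul_of_nonneg_left (hf t ht s hs) (by positivity)).trans (hslope hst).le

theorem ae_enorm_deriv_le_of_enorm_sub_le_lintegral {E : Type*} [NormedAddCommGroup E]
    [NormedSpace ℝ E] {f : ℝ → E} {G : ℝ → ℝ≥0∞} {a b : ℝ} (hab : a ≤ b)
    (hG : AEMeasurable G (volume.restrict (Icc a b))) (hGfin : ∫⁻ t in Icc a b, G t ≠ ⊤)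
    (hf : ∀ s ∈ Icc a b, ∀ t ∈ Icc a b, s ≤ t → ‖f t - f s‖ₑ ≤ ∫⁻ r in Icc s t, G r) :
    ∀ᵐ t, t ∈ Icc a b → ‖deriv f t‖ₑ ≤ G t := by
  have hint : IntervalIntegrable (fun t => (G t).toReal) volume a b :=
    (intervalIntegrable_iff_integrableOn_Icc_of_le hab).2
      (integrable_toReal_of_lintegral_ne_top hG hGfin)
  have hincr : ∀ s ∈ Icc a b, ∀ t ∈ Icc a b, s ≤ t →
      ‖f t - f s‖ ≤ ‖∫ r in s..t, (G r).toReal‖ := by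
    intro s hs t ht hst
    have hsub : Icc s t ⊆ Icc a b := Icc_subset_Icc hs.1 ht.2
    have hfin := ne_top_of_le_ne_top hGfin (lintegral_mono_set hsub)
    have hmeas := hG.mono_measure (Measure.restrict_mono hsub le_rfl)
    rw [intervalIntegral.integral_of_le hst, ← integral_Icc_eq_integral_Ioc,
      integral_toReal hmeas (ae_lt_top' hmeas hfin), Real.norm_of_nonneg ENNReal.toReal_nonneg,
      ← toReal_enorm]
    exact ENNReal.toReal_mono hfin (hf s hs t ht hst)
  have hderiv := ae_norm_deriv_le_of_norm_sub_le_integral hint (f := f) fun s hs t ht => by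
    rw [uIcc_of_le hab] at hs ht
    rcases le_total s t with hst | hts
    · exact hincr s hs t ht hst
    · rw [norm_sub_rev, intervalIntegral.integral_symm, norm_neg]
      exact hincr t ht s hs hts
  rw [uIcc_of_le hab] at hderiv
  filter_upwards [hderiv] with t ht htI
  rw [← ofReal_norm]
  refine (ENNReal.ofReal_le_ofReal (ht htI)).trans ?_
  rw [Real.norm_of_nonneg ENNReal.toReal_nonneg]
  exact ENNReal.ofReal_toReal_le

theorem enorm_sub_le_lintegral_of_enorm_deriv_le {f : ℝ → ℝ} {H : ℝ → ℝ≥0∞} {a b : ℝ}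
    (hab : a ≤ b) (hf : AbsolutelyContinuousOnInterval f a b)
    (hH : ∀ᵐ t, t ∈ Icc a b → ‖deriv f t‖ₑ ≤ H t) :
    ‖f b - f a‖ₑ ≤ ∫⁻ t in Icc a b, H t := by
  rw [← hf.integral_deriv_eq_sub, intervalIntegral.integral_of_le hab,
    ← integral_Icc_eq_integral_Ioc]
  exact (enorm_integral_le_lintegral_enorm _).trans
    (lintegral_mono_ae ((ae_restrict_iff' measurableSet_Icc).2 hH))

theorem ae_accPt_of_mem (μ : Measure ℝ) [NullSingletonClass μ] (S : Set ℝ) :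
    ∀ᵐ t ∂μ, t ∈ S → AccPt t (𝓟 S) := by
  filter_upwards [(countable_setOfPred_isolated_right_within (s := S)).ae_notMem μ] with t ht htS
  have hne : (𝓝[S ∩ Ioi t] t).NeBot := ⟨fun h => ht ⟨htS, h⟩⟩
  exact accPt_principal_iff_nhdsWithin.2 <|
    hne.mono <| nhdsWithin_mono t fun s hs => ⟨hs.1, (mem_Ioi.1 hs.2).ne'⟩

theorem ae_deriv_eq_of_eqOn {E : Type*} [NormedAddCommGroup E] [NormedSpace ℝ E]
    (μ : Measure ℝ) [NullSingletonClass μ] {f g : ℝ → E} {S : Set ℝ} (hfg : EqOn f g S) :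
    ∀ᵐ t ∂μ, t ∈ S → DifferentiableAt ℝ f t → DifferentiableAt ℝ g t → deriv f t = deriv g t := by
  filter_upwards [ae_accPt_of_mem μ S] with t hacc htS hf hg
  have huniq := uniqueDiffWithinAt_iff_accPt.2 (hacc htS)
  rw [← hf.derivWithin huniq, ← hg.derivWithin huniq]
  exact derivWithin_congr hfg (hfg htS)

/-- Almost every point where `w` agrees with `f` is an accumulation point of such points, so the
derivatives agree there as well; likewise for `g`. -/
theorem enorm_sub_le_lintegral_piecewise {f g w : ℝ → ℝ} {G H : ℝ → ℝ≥0∞} {a b : ℝ} (hab : a ≤ b)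
    (hf : AbsolutelyContinuousOnInterval f a b) (hg : AbsolutelyContinuousOnInterval g a b)
    (hw : AbsolutelyContinuousOnInterval w a b)
    (hG : ∀ᵐ t, t ∈ Icc a b → ‖deriv f t‖ₑ ≤ G t) (hH : ∀ᵐ t, t ∈ Icc a b → ‖deriv g t‖ₑ ≤ H t)
    {S : Set ℝ} [DecidablePred (· ∈ S)] (hwf : EqOn w f S) (hwg : EqOn w g Sᶜ) :
    ‖w b - w a‖ₑ ≤ ∫⁻ t in Icc a b, S.piecewise G H t := by
  refine enorm_sub_le_lintegral_of_enorm_deriv_le hab hw ?_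
  filter_upwards [hG, hH, hf.ae_differentiableAt, hg.ae_differentiableAt, hw.ae_differentiableAt,
    ae_deriv_eq_of_eqOn volume hwf, ae_deriv_eq_of_eqOn volume hwg]
    with t hGt hHt hft hgt hwt hderivf hderivg ht
  have htu : t ∈ uIcc a b := by rwa [uIcc_of_le hab]
  by_cases htS : t ∈ S
  · rw [hderivf htS (hwt htu) (hft htu), piecewise_eq_of_mem _ _ _ htS]
    exact hGt ht
  · rw [hderivg htS (hwt htu) (hgt htu), piecewise_eq_of_notMem _ _ _ htS]
    exact hHt ht

end RealAnalysis

section Curves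

namespace Curve

section

omit [MeasurableSpace X] [BorelSpace X]

/-- The restriction of a curve to the subinterval `[s, t]` of its domain, reparametrized on
`[0, t - s]`. -/
def restrict (γ : Curve X) {s t : ℝ} (hs : 0 ≤ s) (hst : s ≤ t) (ht : t ≤ γ.len) : Curve X where
  len := t - s
  len_nonneg := sub_nonneg.2 hst
  toFun r := γ.toFun (r + s)
  lipschitzOn a ha b hb := by
    have mem {r : ℝ} (hr : r ∈ Icc 0 (t - s)) : r + s ∈ Icc 0 γ.len :=
      ⟨by linarith [hr.1], by linarith [hr.2]⟩
    simpa [edist_add_right] using γ.lipschitzOn (mem ha) (mem hb)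

theorem absolutelyContinuousOnInterval_comp {u : X → ℝ} (hu : LocallyLipschitz u) (γ : Curve X) :
    AbsolutelyContinuousOnInterval (u ∘ γ.toFun) 0 γ.len := by
  obtain ⟨K, hK⟩ := hu.locallyLipschitzOn.exists_lipschitzOnWith_of_compact
    (isCompact_Icc.image_of_continuousOn γ.lipschitzOn.continuousOn)
  refine LipschitzOnWith.absolutelyContinuousOnInterval (K := K * 1) ?_
  rw [uIcc_of_le γ.len_nonneg]
  exact hK.comp γ.lipschitzOn (mapsTo_image _ _)

end

theorem aemeasurable_toFun (γ : Curve X) :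
    AEMeasurable γ.toFun (volume.restrict (Icc 0 γ.len)) :=
  γ.lipschitzOn.continuousOn.aemeasurable measurableSet_Icc

end Curve

section

omit [MeasurableSpace X] [BorelSpace X]

theorem curveLintegral_mono {g h : X → ℝ≥0∞} (hgh : g ≤ h) (γ : Curve X) :
    curveLintegral g γ ≤ curveLintegral h γ :=
  lintegral_mono fun _ => hgh _

theorem curveLintegral_restrict (g : X → ℝ≥0∞) (γ : Curve X) {s t : ℝ} (hs : 0 ≤ s)
    (hst : s ≤ t) (ht : t ≤ γ.len) :
    curveLintegral g (γ.restrict hs hst ht) = ∫⁻ r in Icc s t, g (γ.toFun r) := by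
  unfold curveLintegral
  rw [← (measurePreserving_add_right volume s).setLIntegral_comp_preimage_emb
    (measurableEmbedding_addRight s) (fun r => g (γ.toFun r)) (Icc s t)]
  simp [Curve.restrict]

theorem upperGradIneq_iff_enorm_sub_le {g : X → ℝ≥0∞} {u : X → ℝ} {γ : Curve X} :
    UpperGradIneq g u γ ↔ ‖u (γ.toFun γ.len) - u (γ.toFun 0)‖ₑ ≤ curveLintegral g γ := by
  rw [UpperGradIneq, Real.enorm_eq_ofReal_abs, abs_sub_comm]

theorem upperGradIneq_const (g : X → ℝ≥0∞) (c : ℝ) (γ : Curve X) :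
    UpperGradIneq g (fun _ => c) γ := by
  simp [UpperGradIneq]

theorem upperGradIneq_const_sub {g : X → ℝ≥0∞} {u : X → ℝ} {γ : Curve X} (c : ℝ) :
    UpperGradIneq g (fun x => c - u x) γ ↔ UpperGradIneq g u γ := by
  rw [UpperGradIneq, UpperGradIneq, _root_.sub_sub_sub_cancel_left, abs_sub_comm]

theorem UpperGradIneq.mono {g h : X → ℝ≥0∞} {u : X → ℝ} {γ : Curve X} (hu : UpperGradIneq g u γ)
    (hgh : g ≤ h) : UpperGradIneq h u γ :=
  hu.trans (curveLintegral_mono hgh γ)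

end

theorem curveLintegral_add_left {g : X → ℝ≥0∞} (hg : Measurable g) (h : X → ℝ≥0∞) (γ : Curve X) :
    curveLintegral (g + h) γ = curveLintegral g γ + curveLintegral h γ :=
  lintegral_add_left' (hg.comp_aemeasurable γ.aemeasurable_toFun) _

theorem curveLintegral_const_mul (c : ℝ≥0∞) {g : X → ℝ≥0∞} (hg : Measurable g) (γ : Curve X) :
    curveLintegral (fun x => c * g x) γ = c * curveLintegral g γ :=
  lintegral_const_mul'' _ (hg.comp_aemeasurable γ.aemeasurable_toFun)

theorem curveLintegral_tsum {g : ℕ → X → ℝ≥0∞} (hg : ∀ n, Measurable (g n)) (γ : Curve X) :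
    curveLintegral (fun x => ∑' n, g n x) γ = ∑' n, curveLintegral (g n) γ :=
  lintegral_tsum fun n => (hg n).comp_aemeasurable γ.aemeasurable_toFun

omit [BorelSpace X] in
theorem IsUpperGradient.enorm_sub_le_lintegral {g : X → ℝ≥0∞} {u : X → ℝ}
    (h : IsUpperGradient g u) (γ : Curve X) {s t : ℝ} (hs : 0 ≤ s) (hst : s ≤ t)
    (ht : t ≤ γ.len) : ‖u (γ.toFun t) - u (γ.toFun s)‖ₑ ≤ ∫⁻ r in Icc s t, g (γ.toFun r) := by
  by_cases hc : (γ.restrict hs hst ht).IsNonconstant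
  · have := upperGradIneq_iff_enorm_sub_le.1 (h.2 _ hc)
    rw [curveLintegral_restrict] at this
    simpa [Curve.restrict] using this
  · have : γ.toFun s = γ.toFun t := by
      by_contra hne
      refine hc ⟨0, ⟨le_rfl, sub_nonneg.2 hst⟩, t - s, ⟨sub_nonneg.2 hst, le_rfl⟩, ?_⟩
      simpa [Curve.restrict] using hne
    simp [this]

theorem IsUpperGradient.ae_enorm_deriv_le {g : X → ℝ≥0∞} {u : X → ℝ} (h : IsUpperGradient g u)
    (γ : Curve X) (hfin : curveLintegral g γ ≠ ⊤) :
    ∀ᵐ t, t ∈ Icc 0 γ.len → ‖deriv (u ∘ γ.toFun) t‖ₑ ≤ g (γ.toFun t) :=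
  ae_enorm_deriv_le_of_enorm_sub_le_lintegral γ.len_nonneg
    (h.1.comp_aemeasurable γ.aemeasurable_toFun) hfin
    fun _ hs _ ht hst => h.enorm_sub_le_lintegral γ hs.1 hst ht.2

theorem IsUpperGradient.upperGradIneq_piecewise {g h : X → ℝ≥0∞} {u v w : X → ℝ}
    (hg : IsUpperGradient g u) (hh : IsUpperGradient h v) (hu : LocallyLipschitz u)
    (hv : LocallyLipschitz v) (hw : LocallyLipschitz w) {S : Set X} [DecidablePred (· ∈ S)]
    (hwu : EqOn w u S) (hwv : EqOn w v Sᶜ) {γ : Curve X} (hgγ : curveLintegral g γ ≠ ⊤)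
    (hhγ : curveLintegral h γ ≠ ⊤) : UpperGradIneq (S.piecewise g h) w γ :=
  letI : DecidablePred (· ∈ γ.toFun ⁻¹' S) := fun t => inferInstanceAs (Decidable (γ.toFun t ∈ S))
  upperGradIneq_iff_enorm_sub_le.2 <| enorm_sub_le_lintegral_piecewise γ.len_nonneg
    (γ.absolutelyContinuousOnInterval_comp hu) (γ.absolutelyContinuousOnInterval_comp hv)
    (γ.absolutelyContinuousOnInterval_comp hw) (hg.ae_enorm_deriv_le γ hgγ)
    (hh.ae_enorm_deriv_le γ hhγ) (S := γ.toFun ⁻¹' S) (fun _ ht => hwu ht) fun _ ht => hwv ht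

end Curves

section Modulus

variable {μ : Measure X}

/-- Fuglede's characterization of families of curves of modulus zero. -/
theorem mod1_eq_zero_iff {Γ : Set (Curve X)} :
    mod1 μ Γ = 0 ↔
      ∃ ρ, Measurable ρ ∧ ∫⁻ x, ρ x ∂μ ≠ ⊤ ∧ ∀ γ ∈ Γ, curveLintegral ρ γ = ⊤ := by
  constructor
  · intro h
    obtain ⟨δ, hδ, hδsum⟩ := ENNReal.exists_pos_sum_of_countable one_ne_zero ℕ
    have hex : ∀ n, ∃ ρ, (Measurable ρ ∧ ∀ γ ∈ Γ, 1 ≤ curveLintegral ρ γ) ∧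
        ∫⁻ x, ρ x ∂μ < δ n := by
      intro n
      have : mod1 μ Γ < δ n := h.trans_lt (mod_cast hδ n)
      simpa only [mod1, iInf_lt_iff, exists_prop] using this
    choose ρ hρ hρδ using hex
    refine ⟨fun x => ∑' n, ρ n x, .tsum fun n => (hρ n).1, ?_, fun γ hγ => ?_⟩
    · rw [lintegral_tsum fun n => (hρ n).1.aemeasurable]
      exact ((ENNReal.tsum_le_tsum fun n => (hρδ n).le).trans_lt
        (hδsum.trans ENNReal.one_lt_top)).ne
    · rw [curveLintegral_tsum fun n => (hρ n).1, eq_top_iff,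
        ← ENNReal.tsum_const_eq_top_of_ne_zero (α := ℕ) one_ne_zero]
      exact ENNReal.tsum_le_tsum fun n => (hρ n).2 γ hγ
  · rintro ⟨ρ, hρ, hfin, htop⟩
    refine nonpos_iff_eq_zero.1 (le_of_forall_gt fun ε hε => ?_)
    obtain ⟨c, hc, hcε⟩ := ENNReal.exists_nnreal_pos_mul_lt hfin hε.ne'
    rw [← lintegral_const_mul _ hρ] at hcε
    refine lt_of_le_of_lt (iInf₂_le _ ⟨hρ.const_mul _, fun γ hγ => ?_⟩) hcε
    rw [curveLintegral_const_mul _ hρ, htop γ hγ, ENNReal.mul_top (mod_cast hc.ne')]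
    exact le_top

end Modulus

section GradEnergy

variable {μ : Measure X} {u v : X → ℝ} {W : Set X}

theorem IsUpperGradient.isWeakUpperGradientOn {g : X → ℝ≥0∞} (h : IsUpperGradient g u)
    (μ : Measure X) (W : Set X) : IsWeakUpperGradientOn μ g u W :=
  ⟨h.1, mod1_eq_zero_iff.2 ⟨0, measurable_zero, by simp, fun γ hγ => absurd (h.2 γ hγ.1) hγ.2.2⟩⟩

theorem gradEnergy_const (μ : Measure X) (c : ℝ) (W : Set X) :
    gradEnergy μ (fun _ => c) W = 0 := by
  have h : IsUpperGradient (0 : X → ℝ≥0∞) fun _ => c :=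
    ⟨measurable_zero, fun γ _ => upperGradIneq_const 0 c γ⟩
  exact nonpos_iff_eq_zero.1 ((iInf₂_le 0 (h.isWeakUpperGradientOn μ W)).trans (by simp))

omit [BorelSpace X] in
theorem gradEnergy_const_sub (μ : Measure X) (c : ℝ) (u : X → ℝ) (W : Set X) :
    gradEnergy μ (fun x => c - u x) W = gradEnergy μ u W := by
  simp only [gradEnergy, IsWeakUpperGradientOn, upperGradIneq_const_sub]

theorem IsWeakUpperGradientOn.exists_isUpperGradient_lintegral_lt {g : X → ℝ≥0∞}
    (h : IsWeakUpperGradientOn μ g u univ) {c : ℝ≥0∞} (hc : ∫⁻ x, g x ∂μ < c) :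
    ∃ g', IsUpperGradient g' u ∧ ∫⁻ x, g' x ∂μ < c := by
  obtain ⟨ρ, hρ, hfin, htop⟩ := mod1_eq_zero_iff.1 h.2
  obtain ⟨ε, hε, hεc⟩ := ENNReal.exists_nnreal_pos_mul_lt hfin (tsub_pos_of_lt hc).ne'
  have hρε : Measurable fun x => ε * ρ x := hρ.const_mul _
  refine ⟨g + fun x => ε * ρ x, ⟨h.1.add hρε, fun γ hγ => ?_⟩, ?_⟩
  · by_cases hu : UpperGradIneq g u γ
    · exact hu.mono fun x => le_self_add
    · rw [UpperGradIneq, curveLintegral_add_left h.1, curveLintegral_const_mul _ hρ,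
        htop γ ⟨hγ, fun _ _ => mem_univ _, hu⟩, ENNReal.mul_top (mod_cast hε.ne'), add_top]
      exact le_top
  · simp only [Pi.add_apply]
    rw [lintegral_add_left h.1, lintegral_const_mul _ hρ]
    exact lt_tsub_iff_left.1 hεc

theorem gradEnergy_univ_eq_iInf_isUpperGradient (μ : Measure X) (u : X → ℝ) :
    gradEnergy μ u univ = ⨅ (g : X → ℝ≥0∞) (_ : IsUpperGradient g u), ∫⁻ x, g x ∂μ := by
  simp only [gradEnergy, Measure.restrict_univ]
  refine le_antisymm (le_iInf₂ fun g hg => iInf₂_le g (hg.isWeakUpperGradientOn μ univ))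
    (le_iInf₂ fun g hg => le_of_forall_gt fun c hc => ?_)
  simpa only [iInf_lt_iff, exists_prop] using hg.exists_isUpperGradient_lintegral_lt hc

theorem IsUpperGradient.isWeakUpperGradientOn_piecewise {g h : X → ℝ≥0∞} {w : X → ℝ}
    (hg : IsUpperGradient g u) (hh : IsUpperGradient h v) (hu : LocallyLipschitz u)
    (hv : LocallyLipschitz v) (hw : LocallyLipschitz w) {S : Set X} [DecidablePred (· ∈ S)]
    (hS : MeasurableSet S) (hwu : EqOn w u S) (hwv : EqOn w v Sᶜ) (hgfin : ∫⁻ x, g x ∂μ ≠ ⊤)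
    (hhfin : ∫⁻ x, h x ∂μ ≠ ⊤) (W : Set X) :
    IsWeakUpperGradientOn μ (S.piecewise g h) w W := by
  refine ⟨hg.1.piecewise hS hh.1, mod1_eq_zero_iff.2 ⟨g + h, hg.1.add hh.1, ?_, fun γ hγ => ?_⟩⟩
  · simp only [Pi.add_apply]
    rw [lintegral_add_left hg.1]
    exact ENNReal.add_ne_top.2 ⟨hgfin, hhfin⟩
  · by_contra hne
    rw [curveLintegral_add_left hg.1] at hne
    have hfin := ENNReal.add_ne_top.1 hne
    exact hγ.2.2 (hg.upperGradIneq_piecewise hh hu hv hw hwu hwv hfin.1 hfin.2)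

theorem gradEnergy_max_add_gradEnergy_min_le (μ : Measure X) (hu : LocallyLipschitz u)
    (hv : LocallyLipschitz v) :
    gradEnergy μ (fun x => max (u x) (v x)) univ + gradEnergy μ (fun x => min (u x) (v x)) univ ≤
      gradEnergy μ u univ + gradEnergy μ v univ := by
  classical
  rw [gradEnergy_univ_eq_iInf_isUpperGradient μ u, gradEnergy_univ_eq_iInf_isUpperGradient μ v]
  refine ENNReal.le_iInf₂_add_iInf₂ fun g hg h hh => ?_
  by_cases hfin : ∫⁻ x, g x ∂μ + ∫⁻ x, h x ∂μ = ⊤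
  · exact hfin ▸ le_top
  obtain ⟨hgfin, hhfin⟩ := ENNReal.add_ne_top.1 hfin
  set S : Set X := {x | v x ≤ u x}
  have hS : MeasurableSet S := (isClosed_le hv.continuous hu.continuous).measurableSet
  have hmax := hg.isWeakUpperGradientOn_piecewise hh hu hv (hu.max hv) hS
    (fun x hx => max_eq_left hx) (fun x hx => max_eq_right (le_of_not_ge hx)) hgfin hhfin univ
  have hmin := hh.isWeakUpperGradientOn_piecewise hg hv hu (hu.min hv) hS
    (fun x hx => min_eq_right hx) (fun x hx => min_eq_left (le_of_not_ge hx)) hhfin hgfin univ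
  refine (add_le_add (iInf₂_le (S.piecewise g h) hmax)
    (iInf₂_le (S.piecewise h g) hmin)).trans_eq ?_
  rw [Measure.restrict_univ, ← lintegral_add_left hmax.1, ← lintegral_add_left hg.1]
  refine lintegral_congr fun x => ?_
  by_cases hx : x ∈ S <;> simp [hx, add_comm]

end GradEnergy

theorem liminf_add_liminf_le_liminf_add (a b : ℕ → ℝ≥0∞) :
    liminf a atTop + liminf b atTop ≤ liminf (fun n => a n + b n) atTop := by
  simp only [liminf_eq_iSup_iInf_of_nat]
  rw [ENNReal.iSup_add_iSup_of_monotone (fun m n h => biInf_mono fun i hi => le_trans h hi)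
    fun m n h => biInf_mono fun i hi => le_trans h hi]
  exact iSup_mono fun n => le_iInf₂ fun i hi => add_le_add (iInf₂_le i hi) (iInf₂_le i hi)

section Variation

variable {μ : Measure X} {W : Set X} {u u' : ℕ → X → ℝ} {v v' : X → ℝ}

section

omit [MeasurableSpace X] [BorelSpace X]

theorem locLipschitzOn_univ_iff {u : X → ℝ} : LocLipschitzOn u univ ↔ LocallyLipschitz u := by
  simp [LocLipschitzOn, LocallyLipschitz]

theorem LocLipschitzOn.const_sub {u : X → ℝ} (hu : LocLipschitzOn u W) (c : ℝ) :
    LocLipschitzOn (fun x => c - u x) W := by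
  intro x hx
  obtain ⟨K, t, ht, hK⟩ := hu x hx
  refine ⟨K, t, ht, fun y hy z hz => ?_⟩
  rw [edist_sub_left]
  exact hK hy hz

end

section

omit [BorelSpace X]

theorem tendstoL1loc_iff_edist :
    TendstoL1loc μ W u v ↔
      ∀ W' : Set X, IsOpen W' → IsCompact (closure W') → closure W' ⊆ W →
        Tendsto (fun i => ∫⁻ x in W', edist (u i x) (v x) ∂μ) atTop (𝓝 0) := by
  simp only [TendstoL1loc, edist_dist, Real.dist_eq]

theorem tendstoL1loc_univ_iff [WeaklyLocallyCompactSpace X] :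
    TendstoL1loc μ univ u v ↔
      ∀ K : Set X, IsCompact K →
        Tendsto (fun i => ∫⁻ x in K, edist (u i x) (v x) ∂μ) atTop (𝓝 0) := by
  rw [tendstoL1loc_iff_edist]
  refine ⟨fun h K hK => ?_, fun h W' _ hW' _ => ?_⟩
  · obtain ⟨W', hW', hKW', hcomp⟩ := exists_isOpen_superset_and_isCompact_closure hK
    exact tendsto_of_tendsto_of_tendsto_of_le_of_le tendsto_const_nhds
      (h W' hW' hcomp (subset_univ _)) (fun _ => zero_le) fun _ => lintegral_mono_set hKW'
  · exact tendsto_of_tendsto_of_tendsto_of_le_of_le tendsto_const_nhds (h _ hW')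
      (fun _ => zero_le) fun _ => lintegral_mono_set subset_closure

theorem exists_seq_tendstoL1loc [WeaklyLocallyCompactSpace X] [SigmaCompactSpace X]
    {P : ℕ → (X → ℝ) → Prop}
    (h : ∀ K : Set X, IsCompact K → ∀ ε : ℝ≥0∞, ε ≠ 0 → ∀ n,
      ∃ w, P n w ∧ ∫⁻ x in K, edist (w x) (v x) ∂μ < ε) :
    ∃ w : ℕ → X → ℝ, (∀ n, P n (w n)) ∧ TendstoL1loc μ univ w v := by
  let K := CompactExhaustion.choice X
  choose w hP hw using fun n : ℕ =>
    h (K n) (K.isCompact n) (n : ℝ≥0∞)⁻¹ (ENNReal.inv_ne_zero.2 (natCast_ne_top n)) n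
  refine ⟨w, hP, tendstoL1loc_univ_iff.2 fun L hL => ?_⟩
  obtain ⟨N, hN⟩ := K.exists_superset_of_isCompact hL
  refine tendsto_of_tendsto_of_tendsto_of_le_of_le' tendsto_const_nhds
    ENNReal.tendsto_inv_nat_nhds_zero (.of_forall fun _ => zero_le) ?_
  filter_upwards [eventually_ge_atTop N] with n hn
  exact (lintegral_mono_set (hN.trans (K.subset hn))).trans (hw n).le

theorem tendstoL1loc_const_sub_iff (c : ℝ) :
    TendstoL1loc μ W (fun i x => c - u i x) (fun x => c - v x) ↔ TendstoL1loc μ W u v := by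
  simp only [tendstoL1loc_iff_edist, edist_sub_left]

theorem tendstoL1loc_congr_ae (h : v =ᵐ[μ] v') :
    TendstoL1loc μ W u v ↔ TendstoL1loc μ W u v' := by
  have hint (i : ℕ) (W' : Set X) : ∫⁻ x in W', edist (u i x) (v x) ∂μ =
      ∫⁻ x in W', edist (u i x) (v' x) ∂μ :=
    lintegral_congr_ae (ae_restrict_of_ae (h.mono fun x hx => by dsimp only; rw [hx]))
  simp only [tendstoL1loc_iff_edist, hint]

theorem TendstoL1loc.comp_lipschitzWith {K : ℝ≥0} {Φ : ℝ × ℝ → ℝ} (hΦ : LipschitzWith K Φ)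
    (hu : TendstoL1loc μ W u v) (hu' : TendstoL1loc μ W u' v') (hum : ∀ i, Measurable (u i))
    (hvm : Measurable v) :
    TendstoL1loc μ W (fun i x => Φ (u i x, u' i x)) (fun x => Φ (v x, v' x)) := by
  rw [tendstoL1loc_iff_edist] at *
  intro W' hopen hcomp hsub
  have hlim := ENNReal.Tendsto.const_mul
    ((hu W' hopen hcomp hsub).add (hu' W' hopen hcomp hsub)) (.inr (coe_ne_top (r := K)))
  rw [add_zero, mul_zero] at hlim
  refine tendsto_of_tendsto_of_tendsto_of_le_of_le tendsto_const_nhds hlim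
    (fun _ => zero_le) fun i => ?_
  dsimp only
  rw [← lintegral_add_left ((hum i).edist hvm), ← lintegral_const_mul' _ _ coe_ne_top]
  refine lintegral_mono fun x => (hΦ _ _).trans ?_
  gcongr
  exact max_le_add_of_nonneg zero_le zero_le

protected theorem TendstoL1loc.max (hu : TendstoL1loc μ W u v) (hu' : TendstoL1loc μ W u' v')
    (hum : ∀ i, Measurable (u i)) (hvm : Measurable v) :
    TendstoL1loc μ W (fun i x => max (u i x) (u' i x)) (fun x => max (v x) (v' x)) :=
  .comp_lipschitzWith (Φ := fun p => max p.1 p.2) lipschitzWith_max hu hu' hum hvm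

protected theorem TendstoL1loc.min (hu : TendstoL1loc μ W u v) (hu' : TendstoL1loc μ W u' v')
    (hum : ∀ i, Measurable (u i)) (hvm : Measurable v) :
    TendstoL1loc μ W (fun i x => min (u i x) (u' i x)) (fun x => min (v x) (v' x)) :=
  .comp_lipschitzWith (Φ := fun p => min p.1 p.2) lipschitzWith_min hu hu' hum hvm

theorem variationOn_le_liminf (hu : ∀ i, LocLipschitzOn (u i) W) (huv : TendstoL1loc μ W u v) :
    variationOn μ v W ≤ liminf (fun i => gradEnergy μ (u i) W) atTop :=
  iInf₂_le u ⟨hu, huv⟩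

theorem variationOn_congr_ae (h : v =ᵐ[μ] v') : variationOn μ v W = variationOn μ v' W := by
  simp only [variationOn, tendstoL1loc_congr_ae h]

theorem variationOn_const_sub (μ : Measure X) (c : ℝ) (v : X → ℝ) (W : Set X) :
    variationOn μ (fun x => c - v x) W = variationOn μ v W := by
  have hle (v : X → ℝ) : variationOn μ (fun x => c - v x) W ≤ variationOn μ v W :=
    le_iInf₂ fun u hu => by
      simpa only [gradEnergy_const_sub] using variationOn_le_liminf
        (fun i => (hu.1 i).const_sub c) ((tendstoL1loc_const_sub_iff c).2 hu.2)
  exact (hle v).antisymm (by simpa only [_root_.sub_sub_cancel] using hle fun x => c - v x)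

theorem exists_gradEnergy_lt_of_variationOn_lt [WeaklyLocallyCompactSpace X] {c : ℝ≥0∞}
    (h : variationOn μ v univ < c) {K : Set X} (hK : IsCompact K) {ε : ℝ≥0∞} (hε : ε ≠ 0) :
    ∃ w, (LocallyLipschitz w ∧ gradEnergy μ w univ < c) ∧
      ∫⁻ x in K, edist (w x) (v x) ∂μ < ε := by
  simp only [variationOn, iInf_lt_iff] at h
  obtain ⟨u, ⟨hu, huv⟩, hc⟩ := h
  obtain ⟨n, hn, hnK⟩ := ((frequently_lt_of_liminf_lt (by isBoundedDefault) hc).and_eventually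
    ((tendstoL1loc_univ_iff.1 huv K hK).eventually_lt_const (pos_iff_ne_zero.2 hε))).exists
  exact ⟨u n, ⟨locLipschitzOn_univ_iff.1 (hu n), hn⟩, hnK⟩

theorem exists_seq_tendsto_variationOn [WeaklyLocallyCompactSpace X] [SigmaCompactSpace X]
    (h : variationOn μ v univ ≠ ⊤) :
    ∃ u : ℕ → X → ℝ, (∀ n, LocallyLipschitz (u n)) ∧ TendstoL1loc μ univ u v ∧
      Tendsto (fun n => gradEnergy μ (u n) univ) atTop (𝓝 (variationOn μ v univ)) := by
  have hlt (n : ℕ) : variationOn μ v univ < variationOn μ v univ + (n : ℝ≥0∞)⁻¹ :=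
    ENNReal.lt_add_right h (ENNReal.inv_ne_zero.2 (natCast_ne_top n))
  obtain ⟨u, hu, huv⟩ := exists_seq_tendstoL1loc fun K hK ε hε n =>
    exists_gradEnergy_lt_of_variationOn_lt (hlt n) hK hε
  refine ⟨u, fun n => (hu n).1, huv, tendsto_of_le_liminf_of_limsup_le
    (variationOn_le_liminf (fun n => locLipschitzOn_univ_iff.2 (hu n).1) huv) ?_⟩
  have hlim : Tendsto (fun n : ℕ => variationOn μ v univ + (n : ℝ≥0∞)⁻¹) atTop
      (𝓝 (variationOn μ v univ)) := by
    simpa using ENNReal.tendsto_inv_nat_nhds_zero.const_add (variationOn μ v univ)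
  exact (limsup_le_limsup (.of_forall fun n => (hu n).2.le)).trans_eq hlim.limsup_eq

end

theorem variationOn_const (μ : Measure X) (c : ℝ) (W : Set X) :
    variationOn μ (fun _ => c) W = 0 := by
  refine nonpos_iff_eq_zero.1 ((variationOn_le_liminf (u := fun _ _ => c)
    (fun _ _ _ => ⟨0, univ, univ_mem, fun y _ z _ => by simp⟩) ?_).trans ?_)
  · simp [tendstoL1loc_iff_edist]
  · simp [gradEnergy_const]

variable [WeaklyLocallyCompactSpace X] [SigmaCompactSpace X]

theorem variationOn_le_liminf_variationOn (hum : ∀ i, Measurable (u i))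
    (huv : TendstoL1loc μ univ u v) :
    variationOn μ v univ ≤ liminf (fun i => variationOn μ (u i) univ) atTop := by
  refine le_of_forall_gt fun c hc => ?_
  obtain ⟨c', hc', hcc'⟩ := exists_between hc
  obtain ⟨w, hw, hwv⟩ := exists_seq_tendstoL1loc (μ := μ) (v := v)
    (P := fun _ w => LocallyLipschitz w ∧ gradEnergy μ w univ < c') fun K hK ε hε _ => by
      have hε2 : ε / 2 ≠ 0 := (ENNReal.half_pos hε).ne'
      obtain ⟨n, hn, hnK⟩ :=
        ((frequently_lt_of_liminf_lt (by isBoundedDefault) hc').and_eventually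
          ((tendstoL1loc_univ_iff.1 huv K hK).eventually_lt_const (ENNReal.half_pos hε))).exists
      obtain ⟨w, hw, hwK⟩ := exists_gradEnergy_lt_of_variationOn_lt hn hK hε2
      refine ⟨w, hw, ?_⟩
      calc ∫⁻ x in K, edist (w x) (v x) ∂μ
          ≤ ∫⁻ x in K, (edist (w x) (u n x) + edist (u n x) (v x)) ∂μ :=
            lintegral_mono fun x => edist_triangle _ _ _
        _ = ∫⁻ x in K, edist (w x) (u n x) ∂μ + ∫⁻ x in K, edist (u n x) (v x) ∂μ :=
            lintegral_add_left (hw.1.continuous.measurable.edist (hum n)) _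
        _ < ε / 2 + ε / 2 := ENNReal.add_lt_add hwK hnK
        _ = ε := ENNReal.add_halves ε
  refine lt_of_le_of_lt ?_ hcc'
  refine (variationOn_le_liminf (fun n => locLipschitzOn_univ_iff.2 (hw n).1) hwv).trans ?_
  exact liminf_le_of_le (by isBoundedDefault) fun b hb =>
    hb.exists.elim fun n hn => hn.trans (hw n).2.le

theorem variationOn_max_add_variationOn_min_le (hv : Measurable v) :
    variationOn μ (fun x => max (v x) (v' x)) univ +
        variationOn μ (fun x => min (v x) (v' x)) univ ≤
      variationOn μ v univ + variationOn μ v' univ := by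
  by_cases hfin : variationOn μ v univ + variationOn μ v' univ = ⊤
  · exact hfin ▸ le_top
  obtain ⟨hfin, hfin'⟩ := ENNReal.add_ne_top.1 hfin
  obtain ⟨u, hu, huv, hE⟩ := exists_seq_tendsto_variationOn hfin
  obtain ⟨u', hu', huv', hE'⟩ := exists_seq_tendsto_variationOn hfin'
  have hum (n : ℕ) : Measurable (u n) := (hu n).continuous.measurable
  calc _ ≤ liminf (fun n => gradEnergy μ (fun x => max (u n x) (u' n x)) univ) atTop +
        liminf (fun n => gradEnergy μ (fun x => min (u n x) (u' n x)) univ) atTop :=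
        add_le_add
          (variationOn_le_liminf (fun n => locLipschitzOn_univ_iff.2 ((hu n).max (hu' n)))
            (huv.max huv' hum hv))
          (variationOn_le_liminf (fun n => locLipschitzOn_univ_iff.2 ((hu n).min (hu' n)))
            (huv.min huv' hum hv))
    _ ≤ liminf (fun n => gradEnergy μ (fun x => max (u n x) (u' n x)) univ +
          gradEnergy μ (fun x => min (u n x) (u' n x)) univ) atTop :=
        liminf_add_liminf_le_liminf_add _ _
    _ ≤ liminf (fun n => gradEnergy μ (u n) univ + gradEnergy μ (u' n) univ) atTop :=
        liminf_le_liminf (.of_forall fun n => gradEnergy_max_add_gradEnergy_min_le μ (hu n) (hu' n))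
    _ = variationOn μ v univ + variationOn μ v' univ := (hE.add hE').liminf_eq

end Variation

section Perimeter

variable {μ : Measure X} {A B : Set X}

section

omit [BorelSpace X]

theorem perimeter_univ_eq_variationOn (μ : Measure X) (A : Set X) :
    perimeter μ A univ = variationOn μ (A.indicator fun _ => (1 : ℝ)) univ :=
  (iInf₂_le univ ⟨isOpen_univ, Subset.rfl⟩).antisymm
    (le_iInf₂ fun W hW => by rw [univ_subset_iff.1 hW.2])

theorem perimeter_congr_ae (h : A =ᵐ[μ] B) : perimeter μ A univ = perimeter μ B univ := by
  simp only [perimeter_univ_eq_variationOn]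
  exact variationOn_congr_ae (indicator_ae_eq_of_ae_eq_set h)

theorem perimeter_compl (μ : Measure X) (A : Set X) :
    perimeter μ Aᶜ univ = perimeter μ A univ := by
  simp only [perimeter_univ_eq_variationOn, indicator_compl]
  exact variationOn_const_sub μ 1 _ univ

end

theorem perimeter_empty (μ : Measure X) : perimeter μ ∅ univ = 0 := by
  rw [perimeter_univ_eq_variationOn, indicator_empty]
  exact variationOn_const μ 0 univ

section

variable [WeaklyLocallyCompactSpace X] [SigmaCompactSpace X]

theorem perimeter_union_add_perimeter_inter_le (hA : MeasurableSet A) :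
    perimeter μ (A ∪ B) univ + perimeter μ (A ∩ B) univ ≤
      perimeter μ A univ + perimeter μ B univ := by
  have hmax : (A ∪ B).indicator (fun _ => (1 : ℝ)) = fun x =>
      max (A.indicator (fun _ => 1) x) (B.indicator (fun _ => 1) x) := by
    ext x; by_cases hxA : x ∈ A <;> by_cases hxB : x ∈ B <;> simp [hxA, hxB]
  have hmin : (A ∩ B).indicator (fun _ => (1 : ℝ)) = fun x =>
      min (A.indicator (fun _ => 1) x) (B.indicator (fun _ => 1) x) := by
    ext x; by_cases hxA : x ∈ A <;> by_cases hxB : x ∈ B <;> simp [hxA, hxB]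
  simp only [perimeter_univ_eq_variationOn, hmax, hmin]
  exact variationOn_max_add_variationOn_min_le (measurable_const.indicator hA)

theorem perimeter_union_le (hA : MeasurableSet A) :
    perimeter μ (A ∪ B) univ ≤ perimeter μ A univ + perimeter μ B univ :=
  le_self_add.trans (perimeter_union_add_perimeter_inter_le hA)

theorem measurableSet_accumulate {α : Type*} [MeasurableSpace α] {F : ℕ → Set α}
    (hF : ∀ i, MeasurableSet (F i)) (n : ℕ) : MeasurableSet (accumulate F n) :=
  .biUnion (to_countable _) fun i _ => hF i

theorem perimeter_accumulate_le {F : ℕ → Set X} (hF : ∀ i, MeasurableSet (F i)) (n : ℕ) :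
    perimeter μ (accumulate F n) univ ≤ ∑' i, perimeter μ (F i) univ := by
  refine le_trans ?_ (ENNReal.sum_le_tsum (Finset.range (n + 1)))
  induction n with
  | zero => simp
  | succ n ih =>
    rw [accumulate_succ, Finset.sum_range_succ]
    exact (perimeter_union_le (measurableSet_accumulate hF n)).trans (by gcongr)

end

omit [BorelSpace X] in
theorem tendstoL1loc_indicator_iUnion [WeaklyLocallyCompactSpace X]
    [IsFiniteMeasureOnCompacts μ] {F : ℕ → Set X} (hmono : Monotone F)
    (hF : ∀ n, MeasurableSet (F n)) :
    TendstoL1loc μ univ (fun n => (F n).indicator fun _ => (1 : ℝ))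
      ((⋃ n, F n).indicator fun _ => 1) := by
  refine tendstoL1loc_univ_iff.2 fun K hK => ?_
  have hmeas (n : ℕ) : Measurable fun x =>
      edist ((F n).indicator (fun _ => (1 : ℝ)) x) ((⋃ n, F n).indicator (fun _ => 1) x) :=
    (measurable_const.indicator (hF n)).edist (measurable_const.indicator (.iUnion hF))
  have hbound (n : ℕ) (x : X) :
      edist ((F n).indicator (fun _ => (1 : ℝ)) x) ((⋃ n, F n).indicator (fun _ => 1) x) ≤ 1 := by
    by_cases hx : x ∈ F n <;> by_cases hx' : x ∈ ⋃ n, F n <;> simp [hx, hx', edist_dist]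
  have hlim (x : X) : Tendsto (fun n => edist ((F n).indicator (fun _ => (1 : ℝ)) x)
      ((⋃ n, F n).indicator (fun _ => 1) x)) atTop (𝓝 0) := by
    refine tendsto_const_nhds.congr' ?_
    filter_upwards [tendsto_pure.1 (hmono.tendsto_indicator F (fun _ => (1 : ℝ)) x)] with n hn
    rw [hn, edist_self]
  have := tendsto_lintegral_of_dominated_convergence (μ := μ.restrict K) 1 hmeas
    (fun n => .of_forall (hbound n)) (by simpa using hK.measure_lt_top.ne) (.of_forall hlim)
  simpa using this

theorem perimeter_iUnion_le [WeaklyLocallyCompactSpace X] [SigmaCompactSpace X]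
    [IsFiniteMeasureOnCompacts μ] {F : ℕ → Set X} (hF : ∀ i, MeasurableSet (F i)) :
    perimeter μ (⋃ i, F i) univ ≤ ∑' i, perimeter μ (F i) univ := by
  rw [← iUnion_accumulate, perimeter_univ_eq_variationOn]
  refine (variationOn_le_liminf_variationOn
    (fun n => measurable_const.indicator (measurableSet_accumulate hF n))
    (tendstoL1loc_indicator_iUnion monotone_accumulate (measurableSet_accumulate hF))).trans ?_
  simp only [← perimeter_univ_eq_variationOn]
  exact liminf_le_of_le (by isBoundedDefault) fun b hb =>
    hb.exists.elim fun n hn => hn.trans (perimeter_accumulate_le hF n)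

theorem perimeter_biUnion_le [WeaklyLocallyCompactSpace X] [SigmaCompactSpace X]
    [IsFiniteMeasureOnCompacts μ] {I : Set ℕ} {F : ℕ → Set X}
    (hF : ∀ i ∈ I, MeasurableSet (F i)) :
    perimeter μ (⋃ i ∈ I, F i) univ ≤ ∑' i : I, perimeter μ (F i) univ := by
  classical
  refine (perimeter_iUnion_le fun i => MeasurableSet.iUnion fun hi => hF i hi).trans_eq ?_
  rw [tsum_subtype I fun i => perimeter μ (F i) univ]
  refine tsum_congr fun i => ?_
  by_cases hi : i ∈ I <;> simp [hi, perimeter_empty]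

end Perimeter

section Poincare

variable {μ : Measure X} {A : Set X}

omit [MetricSpace X] [BorelSpace X] in
theorem min_measure_compl_le_lintegral_edist_indicator (μ : Measure X) (hA : MeasurableSet A)
    (c : ℝ) : min (μ A) (μ Aᶜ) ≤ ∫⁻ y, edist (A.indicator (fun _ => (1 : ℝ)) y) c ∂μ := by
  have hA1 : ∫⁻ y in A, edist (A.indicator (fun _ => (1 : ℝ)) y) c ∂μ = edist 1 c * μ A := by
    rw [← setLIntegral_const]
    exact setLIntegral_congr_fun hA fun y hy => by simp [indicator_of_mem hy]
  have hA0 : ∫⁻ y in Aᶜ, edist (A.indicator (fun _ => (1 : ℝ)) y) c ∂μ = edist 0 c * μ Aᶜ := by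
    rw [← setLIntegral_const]
    exact setLIntegral_congr_fun hA.compl fun y hy => by simp [indicator_of_notMem hy]
  calc min (μ A) (μ Aᶜ) = edist (1 : ℝ) 0 * min (μ A) (μ Aᶜ) := by simp [edist_dist]
    _ ≤ (edist 1 c + edist 0 c) * min (μ A) (μ Aᶜ) := by
        gcongr
        exact edist_triangle_right _ _ _
    _ ≤ edist 1 c * μ A + edist 0 c * μ Aᶜ := by
        rw [add_mul]
        gcongr
        exacts [min_le_left _ _, min_le_right _ _]
    _ = ∫⁻ y, edist (A.indicator (fun _ => (1 : ℝ)) y) c ∂μ := by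
        rw [← hA1, ← hA0, lintegral_add_compl _ hA]

variable [ProperSpace X] [IsFiniteMeasureOnCompacts μ]

theorem SupportsPoincare.exists_mul_iInf_lintegral_edist_le_gradEnergy (hP : SupportsPoincare μ) :
    ∃ C lam : ℝ, 1 ≤ lam ∧ ∀ (x : X) (r : ℝ), 0 < r → ∀ u : X → ℝ, LocallyLipschitz u →
      μ (ball x (lam * r)) * ⨅ c : ℝ, ∫⁻ y in ball x r, edist (u y) c ∂μ ≤
        ENNReal.ofReal (C * r) * μ (ball x r) * gradEnergy μ u univ := by
  obtain ⟨C, lam, hC, hlam, hPI⟩ := hP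
  refine ⟨C, lam, hlam, fun x r hr u hu => ?_⟩
  have hint (y : X) (s : ℝ) : IntegrableOn u (ball y s) μ :=
    (hu.continuous.locallyIntegrable.integrableOn_isCompact
      (isCompact_closedBall y s)).mono_set ball_subset_closedBall
  obtain hball | hball := eq_or_ne (μ (ball x r)) 0
  · simp [Measure.restrict_eq_zero.2 hball]
  have hpos : ENNReal.ofReal (C * r) * μ (ball x r) ≠ 0 :=
    mul_ne_zero (ofReal_pos.2 (mul_pos hC hr)).ne' hball
  have hfin : ENNReal.ofReal (C * r) * μ (ball x r) ≠ ⊤ :=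
    ENNReal.mul_ne_top ofReal_ne_top measure_ball_lt_top.ne
  simp only [gradEnergy_univ_eq_iInf_isUpperGradient, ENNReal.mul_iInf_of_ne hpos hfin]
  refine le_iInf₂ fun g hg => ?_
  calc μ (ball x (lam * r)) * ⨅ c : ℝ, ∫⁻ y in ball x r, edist (u y) c ∂μ
      ≤ μ (ball x (lam * r)) * ∫⁻ y in ball x r, edist (u y) (⨍ z in ball x r, u z ∂μ) ∂μ := by
        gcongr
        exact iInf_le _ _
    _ ≤ ENNReal.ofReal (C * r) * μ (ball x r) * ∫⁻ y in ball x (lam * r), g y ∂μ := by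
        simpa only [edist_dist, Real.dist_eq] using hPI x r hr u g hint hg
    _ ≤ ENNReal.ofReal (C * r) * μ (ball x r) * ∫⁻ y, g y ∂μ := by
        gcongr
        exact Measure.restrict_le_self

theorem SupportsPoincare.exists_mul_iInf_lintegral_edist_le_variationOn
    (hP : SupportsPoincare μ) :
    ∃ C lam : ℝ, 1 ≤ lam ∧ ∀ (x : X) (r : ℝ), 0 < r → ∀ v : X → ℝ, Measurable v →
      variationOn μ v univ ≠ ⊤ →
      μ (ball x (lam * r)) * ⨅ c : ℝ, ∫⁻ y in ball x r, edist (v y) c ∂μ ≤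
        ENNReal.ofReal (C * r) * μ (ball x r) * variationOn μ v univ := by
  obtain ⟨C, lam, hlam, hPI⟩ := hP.exists_mul_iInf_lintegral_edist_le_gradEnergy
  refine ⟨C, lam, hlam, fun x r hr v hv hfin => ?_⟩
  obtain ⟨u, hu, huv, hE⟩ := exists_seq_tendsto_variationOn hfin
  have hball : Tendsto (fun n => ∫⁻ y in ball x r, edist (u n y) (v y) ∂μ) atTop (𝓝 0) :=
    tendstoL1loc_iff_edist.1 huv _ isOpen_ball isBounded_ball.isCompact_closure (subset_univ _)
  have hlim := (ENNReal.Tendsto.const_mul hball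
    (.inr (measure_ball_lt_top (μ := μ) (x := x) (r := lam * r)).ne)).add
    (ENNReal.Tendsto.const_mul hE (.inr (ENNReal.mul_ne_top (ofReal_ne_top (r := C * r))
      (measure_ball_lt_top (μ := μ) (x := x) (r := r)).ne)))
  rw [mul_zero, zero_add] at hlim
  refine ge_of_tendsto' hlim fun n => ?_
  calc μ (ball x (lam * r)) * ⨅ c : ℝ, ∫⁻ y in ball x r, edist (v y) c ∂μ
      ≤ μ (ball x (lam * r)) * (∫⁻ y in ball x r, edist (u n y) (v y) ∂μ +
          ⨅ c : ℝ, ∫⁻ y in ball x r, edist (u n y) c ∂μ) := by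
        gcongr
        rw [ENNReal.add_iInf]
        refine iInf_mono fun c => ?_
        rw [← lintegral_add_left ((hu n).continuous.measurable.edist hv)]
        exact lintegral_mono fun y => edist_triangle_left _ _ _
    _ ≤ _ := by
        rw [mul_add]
        exact add_le_add_right (hPI x r hr _ (hu n)) _

theorem SupportsPoincare.measure_inter_ball_eq_zero_or (hP : SupportsPoincare μ)
    (hA : MeasurableSet A) (h0 : perimeter μ A univ = 0) (x : X) (r : ℝ) :
    μ (A ∩ ball x r) = 0 ∨ μ (Aᶜ ∩ ball x r) = 0 := by
  obtain hr | hr := le_or_gt r 0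
  · simp [ball_eq_empty.2 hr]
  obtain ⟨C, lam, hlam, h⟩ := hP.exists_mul_iInf_lintegral_edist_le_variationOn
  rw [perimeter_univ_eq_variationOn] at h0
  have hle := h x r hr _ (measurable_const.indicator hA) (h0.trans_ne zero_ne_top)
  rw [h0, mul_zero, nonpos_iff_eq_zero, mul_eq_zero] at hle
  obtain hball | hinf := hle
  · have hsub : ball x r ⊆ ball x (lam * r) :=
      ball_subset_ball (le_mul_of_one_le_left hr.le hlam)
    exact .inl (measure_mono_null (inter_subset_right.trans hsub) hball)
  · have hmin := (le_iInf fun c =>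
      min_measure_compl_le_lintegral_edist_indicator (μ.restrict (ball x r)) hA c).trans_eq hinf
    rwa [nonpos_iff_eq_zero, min_eq_zero, Measure.restrict_apply hA,
      Measure.restrict_apply hA.compl] at hmin

theorem SupportsPoincare.measure_eq_zero_or_of_perimeter_eq_zero (hP : SupportsPoincare μ)
    (hA : MeasurableSet A) (h0 : perimeter μ A univ = 0) : μ A = 0 ∨ μ Aᶜ = 0 := by
  obtain hX | ⟨⟨x⟩⟩ := isEmpty_or_nonempty X
  · simp [Set.eq_empty_of_isEmpty]
  have hlim (B : Set X) : Tendsto (fun n : ℕ => μ (B ∩ ball x n)) atTop (𝓝 (μ B)) := by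
    have hmono : Monotone fun n : ℕ => B ∩ ball x n := fun m n hmn =>
      inter_subset_inter_right _ (ball_subset_ball (mod_cast hmn))
    simpa [Function.comp_def, ← inter_iUnion, iUnion_ball_nat] using
      tendsto_measure_iUnion_atTop (μ := μ) hmono
  by_contra! hne
  obtain ⟨n, hn, hn'⟩ := (((hlim A).eventually_ne hne.1).and
    ((hlim Aᶜ).eventually_ne hne.2)).exists
  exact (hP.measure_inter_ball_eq_zero_or hA h0 x n).elim hn hn'

end Poincare

section Splitting

/-- `{F, G}` is a partition of a set of finite perimeter on which the perimeter is additive.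
Contrary to `IsDecomposableIn`, a part may be null, so that splittings restrict to subsets. -/
structure IsPerimeterSplitting (μ : Measure X) (F G : Set X) : Prop where
  measurableSet_left : MeasurableSet F
  measurableSet_right : MeasurableSet G
  disjoint : Disjoint F G
  perimeter_union_lt_top : perimeter μ (F ∪ G) univ < ⊤
  perimeter_union : perimeter μ (F ∪ G) univ = perimeter μ F univ + perimeter μ G univ

variable {μ : Measure X} {E F G : Set X}

section

omit [BorelSpace X]

theorem IsPerimeterSplitting.symm (h : IsPerimeterSplitting μ F G) :
    IsPerimeterSplitting μ G F where
  measurableSet_left := h.measurableSet_right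
  measurableSet_right := h.measurableSet_left
  disjoint := h.disjoint.symm
  perimeter_union_lt_top := union_comm F G ▸ h.perimeter_union_lt_top
  perimeter_union := by rw [union_comm, h.perimeter_union, add_comm]

theorem isDecomposableIn_univ_iff : IsDecomposableIn μ E univ ↔
    ∃ F G, IsPerimeterSplitting μ F G ∧ F ∪ G = E ∧ 0 < μ F ∧ 0 < μ G := by
  constructor
  · rintro ⟨F, G, hF, hG, hdisj, hU, hFfin, hGfin, hFpos, hGpos, hadd⟩
    rw [inter_univ] at hU
    exact ⟨F, G, ⟨hF, hG, hdisj, hU ▸ hadd ▸ add_lt_top.2 ⟨hFfin, hGfin⟩, hU ▸ hadd⟩,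
      hU, hFpos, hGpos⟩
  · rintro ⟨F, G, h, rfl, hFpos, hGpos⟩
    have hfin := add_lt_top.1 (h.perimeter_union ▸ h.perimeter_union_lt_top)
    exact ⟨F, G, h.measurableSet_left, h.measurableSet_right, h.disjoint, (inter_univ _).symm,
      hfin.1, hfin.2, hFpos, hGpos, h.perimeter_union⟩

end

variable [WeaklyLocallyCompactSpace X] [SigmaCompactSpace X]

theorem IsPerimeterSplitting.perimeter_inter_add_perimeter_inter_le
    (h : IsPerimeterSplitting μ F G) (hE : MeasurableSet E) (hEfin : perimeter μ E univ < ⊤)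
    (hsub : E ⊆ F ∪ G) :
    perimeter μ (E ∩ F) univ + perimeter μ (E ∩ G) univ ≤ perimeter μ E univ := by
  have hF := perimeter_union_add_perimeter_inter_le (μ := μ) (B := F) hE
  have hG := perimeter_union_add_perimeter_inter_le (μ := μ) (B := G) hE
  have hFG := perimeter_union_add_perimeter_inter_le (μ := μ) (B := E ∪ G)
    (hE.union h.measurableSet_left)
  rw [← union_inter_distrib_left, h.disjoint.inter_eq, union_empty, ← union_union_distrib_left,
    union_eq_self_of_subset_left hsub] at hFG
  refine ENNReal.le_of_add_le_add_right
    (add_ne_top.2 ⟨h.perimeter_union_lt_top.ne, hEfin.ne⟩) ?_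
  calc perimeter μ (E ∩ F) univ + perimeter μ (E ∩ G) univ +
        (perimeter μ (F ∪ G) univ + perimeter μ E univ)
      ≤ perimeter μ (E ∩ F) univ + perimeter μ (E ∩ G) univ +
        (perimeter μ (E ∪ F) univ + perimeter μ (E ∪ G) univ) := by gcongr
    _ = (perimeter μ (E ∪ F) univ + perimeter μ (E ∩ F) univ) +
        (perimeter μ (E ∪ G) univ + perimeter μ (E ∩ G) univ) := by ring
    _ ≤ (perimeter μ E univ + perimeter μ F univ) +
        (perimeter μ E univ + perimeter μ G univ) := add_le_add hF hG
    _ = perimeter μ E univ + (perimeter μ (F ∪ G) univ + perimeter μ E univ) := by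
        rw [h.perimeter_union]; ring

theorem IsPerimeterSplitting.inter (h : IsPerimeterSplitting μ F G) (hE : MeasurableSet E)
    (hEfin : perimeter μ E univ < ⊤) (hsub : E ⊆ F ∪ G) :
    IsPerimeterSplitting μ (E ∩ F) (E ∩ G) where
  measurableSet_left := hE.inter h.measurableSet_left
  measurableSet_right := hE.inter h.measurableSet_right
  disjoint := h.disjoint.mono inter_subset_right inter_subset_right
  perimeter_union_lt_top := by rwa [← inter_union_distrib_left, inter_eq_left.2 hsub]
  perimeter_union := by
    refine (perimeter_union_le (hE.inter h.measurableSet_left)).antisymm ?_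
    rw [← inter_union_distrib_left, inter_eq_left.2 hsub]
    exact h.perimeter_inter_add_perimeter_inter_le hE hEfin hsub

theorem IsIndecomposableIn.measure_inter_eq_zero_or (hind : IsIndecomposableIn μ E univ)
    (hE : MeasurableSet E) (hEfin : perimeter μ E univ < ⊤) (h : IsPerimeterSplitting μ F G)
    (hsub : E ⊆ F ∪ G) : μ (E ∩ F) = 0 ∨ μ (E ∩ G) = 0 := by
  by_contra! hne
  refine hind (isDecomposableIn_univ_iff.2 ⟨E ∩ F, E ∩ G, h.inter hE hEfin hsub, ?_,
    pos_iff_ne_zero.2 hne.1, pos_iff_ne_zero.2 hne.2⟩)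
  rw [← inter_union_distrib_left, inter_eq_left.2 hsub]

end Splitting

namespace IsEssentialPartition

variable {μ : Measure X} {A B E : Set X} {I J K : Set ℕ} {F G H : ℕ → Set X} {i j : ℕ}

section

omit [BorelSpace X]

protected theorem measurableSet (h : IsEssentialPartition μ A I F) (hi : i ∈ I) :
    MeasurableSet (F i) := h.1 i hi

protected theorem pairwiseDisjoint (h : IsEssentialPartition μ A I F) : I.PairwiseDisjoint F :=
  h.2.1

theorem biUnion_eq (h : IsEssentialPartition μ A I F) : ⋃ i ∈ I, F i = A := h.2.2.1

theorem measure_pos (h : IsEssentialPartition μ A I F) (hi : i ∈ I) : 0 < μ (F i) :=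
  h.2.2.2.1 i hi

theorem perimeter_lt_top (h : IsEssentialPartition μ A I F) (hi : i ∈ I) :
    perimeter μ (F i) univ < ⊤ := h.2.2.2.2.1 i hi

theorem isIndecomposableIn (h : IsEssentialPartition μ A I F) (hi : i ∈ I) :
    IsIndecomposableIn μ (F i) univ := h.2.2.2.2.2.1 i hi

theorem perimeter_eq_tsum (h : IsEssentialPartition μ A I F) :
    perimeter μ A univ = ∑' i : I, perimeter μ (F i) univ := h.2.2.2.2.2.2

theorem biUnion_union_biUnion_sdiff (h : IsEssentialPartition μ A I F) (hK : K ⊆ I) :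
    (⋃ i ∈ K, F i) ∪ ⋃ i ∈ I \ K, F i = A := by
  rw [← biUnion_union, union_sdiff_cancel hK, h.biUnion_eq]

theorem disjoint_biUnion_sdiff (h : IsEssentialPartition μ A I F) (hK : K ⊆ I) :
    Disjoint (⋃ i ∈ K, F i) (⋃ i ∈ I \ K, F i) :=
  disjoint_iUnion₂_left.2 fun _ hi => disjoint_iUnion₂_right.2 fun _ hj =>
    h.pairwiseDisjoint (hK hi) hj.1 (ne_of_mem_of_not_mem hi hj.2)

theorem compl_union_biUnion (h : IsEssentialPartition μ (univ \ E) I G) (hK : K ⊆ I) :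
    (E ∪ ⋃ i ∈ K, G i)ᶜ = ⋃ i ∈ I \ K, G i := by
  rw [compl_union, ← sdiff_eq, compl_eq_univ_sdiff, ← h.biUnion_union_biUnion_sdiff hK,
    union_sdiff_cancel_left (h.disjoint_biUnion_sdiff hK).inter_eq.subset]

end

section

variable [WeaklyLocallyCompactSpace X] [SigmaCompactSpace X] [IsFiniteMeasureOnCompacts μ]

theorem isPerimeterSplitting (h : IsEssentialPartition μ A I F) (hA : perimeter μ A univ < ⊤)
    (hK : K ⊆ I) : IsPerimeterSplitting μ (⋃ i ∈ K, F i) (⋃ i ∈ I \ K, F i) where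
  measurableSet_left := .biUnion (to_countable _) fun _ hi => h.measurableSet (hK hi)
  measurableSet_right := .biUnion (to_countable _) fun _ hi => h.measurableSet hi.1
  disjoint := h.disjoint_biUnion_sdiff hK
  perimeter_union_lt_top := by rwa [h.biUnion_union_biUnion_sdiff hK]
  perimeter_union := by
    have hmK : ∀ i ∈ K, MeasurableSet (F i) := fun i hi => h.measurableSet (hK hi)
    refine (perimeter_union_le (.biUnion (to_countable _) hmK)).antisymm ?_
    calc perimeter μ (⋃ i ∈ K, F i) univ + perimeter μ (⋃ i ∈ I \ K, F i) univ
        ≤ ∑' i : K, perimeter μ (F i) univ + ∑' i : ↥(I \ K), perimeter μ (F i) univ :=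
          add_le_add (perimeter_biUnion_le hmK)
            (perimeter_biUnion_le fun i hi => h.measurableSet hi.1)
      _ = ∑' i : ↥(K ∪ I \ K), perimeter μ (F i) univ :=
          (ENNReal.summable.tsum_union_disjoint (f := fun i => perimeter μ (F i) univ)
            disjoint_sdiff_right ENNReal.summable).symm
      _ = perimeter μ ((⋃ i ∈ K, F i) ∪ ⋃ i ∈ I \ K, F i) univ := by
          rw [union_sdiff_cancel hK, ← h.perimeter_eq_tsum, h.biUnion_union_biUnion_sdiff hK]

theorem exists_ae_le (h : IsEssentialPartition μ B I G) (hK : K ⊆ I)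
    (hKfin : perimeter μ (⋃ i ∈ K, G i) univ < ⊤)
    (h' : IsEssentialPartition μ (⋃ i ∈ K, G i) J H) (hj : j ∈ J) :
    ∃ i ∈ K, G i ≤ᵐ[μ] H j := by
  have hjJ : {j} ⊆ J := singleton_subset_iff.2 hj
  have hsplit := h'.isPerimeterSplitting hKfin hjJ
  have hunion := h'.biUnion_union_biUnion_sdiff hjJ
  rw [biUnion_singleton] at hsplit hunion
  obtain ⟨i, hi, hne⟩ : ∃ i ∈ K, μ (G i ∩ H j) ≠ 0 := by
    by_contra! hnull
    refine (h'.measure_pos hj).ne' ?_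
    rw [← inter_eq_right.2 (subset_union_left.trans_eq hunion), iUnion₂_inter]
    exact (measure_biUnion_null_iff K.to_countable).2 hnull
  have hsub := (subset_biUnion_of_mem (u := G) hi).trans_eq hunion.symm
  refine ⟨i, hi, ae_le_set.2 (measure_mono_null ?_ (((h.isIndecomposableIn
    (hK hi)).measure_inter_eq_zero_or (h.measurableSet (hK hi)) (h.perimeter_lt_top (hK hi))
    hsplit hsub).resolve_left hne))⟩
  exact fun x hx => ⟨hx.1, (hsub hx.1).resolve_left hx.2⟩

theorem perimeter_eq_add (h : IsEssentialPartition μ (univ \ E) I G)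
    (hEfin : perimeter μ E univ < ⊤) (hK : K ⊆ I) :
    perimeter μ E univ =
      perimeter μ (⋃ i ∈ K, G i) univ + perimeter μ (E ∪ ⋃ i ∈ K, G i) univ := by
  rw [← perimeter_compl, compl_eq_univ_sdiff] at hEfin ⊢
  rw [← perimeter_compl μ (E ∪ _), h.compl_union_biUnion hK,
    ← (h.isPerimeterSplitting hEfin hK).perimeter_union, h.biUnion_union_biUnion_sdiff hK]

theorem exists_ae_le_of_union_biUnion (h : IsEssentialPartition μ (univ \ E) I G)
    (hEfin : perimeter μ E univ < ⊤) (hK : K ⊆ I)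
    (h' : IsEssentialPartition μ (univ \ (E ∪ ⋃ i ∈ K, G i)) J H) (hj : j ∈ J) :
    ∃ i ∈ I \ K, G i ≤ᵐ[μ] H j := by
  rw [← compl_eq_univ_sdiff, h.compl_union_biUnion hK] at h'
  refine h.exists_ae_le sdiff_subset ?_ h' hj
  rw [← h.compl_union_biUnion hK, perimeter_compl]
  exact (le_add_self.trans_eq (h.perimeter_eq_add hEfin hK).symm).trans_lt hEfin

theorem perimeter_eq_zero_of_isPerimeterSplitting (h : IsEssentialPartition μ (univ \ E) I G)
    (hE : MeasurableSet E) (hEfin : perimeter μ E univ < ⊤) (hi : i ∈ I)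
    (hAB : IsPerimeterSplitting μ A B) (hsub : E ∪ G i ⊆ A ∪ B) (hEB : μ (E ∩ B) = 0)
    (hGA : μ (G i ∩ A) = 0) : perimeter μ (G i) univ = 0 := by
  have hfill := h.perimeter_eq_add hEfin (singleton_subset_iff.2 hi)
  rw [biUnion_singleton] at hfill
  have hle : perimeter μ E univ + perimeter μ (G i) univ ≤ perimeter μ (E ∪ G i) univ := by
    have hEA : ((E ∪ G i) ∩ A : Set X) =ᵐ[μ] E := by
      filter_upwards [measure_eq_zero_iff_ae_notMem.1 hEB,
        measure_eq_zero_iff_ae_notMem.1 hGA] with x hxEB hxGA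
      exact propext ⟨fun hx => hx.1.resolve_right fun hG => hxGA ⟨hG, hx.2⟩, fun hx =>
        ⟨.inl hx, (hsub (.inl hx)).resolve_right fun hB => hxEB ⟨hx, hB⟩⟩⟩
    have hGB : ((E ∪ G i) ∩ B : Set X) =ᵐ[μ] G i := by
      filter_upwards [measure_eq_zero_iff_ae_notMem.1 hEB,
        measure_eq_zero_iff_ae_notMem.1 hGA] with x hxEB hxGA
      exact propext ⟨fun hx => hx.1.resolve_left fun hE => hxEB ⟨hE, hx.2⟩, fun hx =>
        ⟨.inr hx, (hsub (.inr hx)).resolve_left fun hA => hxGA ⟨hx, hA⟩⟩⟩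
    rw [← perimeter_congr_ae hEA, ← perimeter_congr_ae hGB]
    exact hAB.perimeter_inter_add_perimeter_inter_le (hE.union (h.measurableSet hi))
      ((le_add_self.trans_eq hfill.symm).trans_lt hEfin) hsub
  refine nonpos_iff_eq_zero.1 (ENNReal.le_of_add_le_add_left hEfin.ne ?_)
  calc perimeter μ E univ + perimeter μ (G i) univ
      ≤ perimeter μ (E ∪ G i) univ := hle
    _ ≤ perimeter μ E univ + 0 := by rw [add_zero, hfill]; exact le_add_self

end

variable [ProperSpace X] [IsFiniteMeasureOnCompacts μ]

theorem measure_right_eq_zero_of_isPerimeterSplitting (hP : SupportsPoincare μ)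
    (h : IsEssentialPartition μ (univ \ E) I G) (hE : MeasurableSet E)
    (hEfin : perimeter μ E univ < ⊤) (hK : K ⊆ I) (hAB : IsPerimeterSplitting μ A B)
    (hU : A ∪ B = E ∪ ⋃ i ∈ K, G i) (hA : μ A ≠ 0) (hEB : μ (E ∩ B) = 0) : μ B = 0 := by
  suffices hcomp : ∀ i ∈ K, μ (G i ∩ B) = 0 by
    rw [← inter_eq_right.2 (subset_union_right.trans_eq hU), union_inter_distrib_right,
      iUnion₂_inter]
    exact measure_union_null hEB ((measure_biUnion_null_iff K.to_countable).2 hcomp)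
  intro i hi
  by_contra hGB
  have hG := h.measurableSet (hK hi)
  have hGsub : G i ⊆ A ∪ B := hU ▸ subset_union_of_subset_right (subset_biUnion_of_mem hi) E
  have hGA : μ (G i ∩ A) = 0 := ((h.isIndecomposableIn (hK hi)).measure_inter_eq_zero_or hG
    (h.perimeter_lt_top (hK hi)) hAB hGsub).resolve_right hGB
  have hzero : perimeter μ (G i) univ = 0 := h.perimeter_eq_zero_of_isPerimeterSplitting hE hEfin
    (hK hi) hAB (union_subset (hU ▸ subset_union_left) hGsub) hEB hGA
  obtain hnull | hconull := hP.measure_eq_zero_or_of_perimeter_eq_zero hG hzero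
  · exact (h.measure_pos (hK hi)).ne' hnull
  · refine hA (measure_mono_null (fun x hx => ?_) (measure_union_null hGA hconull))
    exact (em (x ∈ G i)).imp (⟨·, hx⟩) id

theorem isIndecomposableIn_union_biUnion (hP : SupportsPoincare μ)
    (h : IsEssentialPartition μ (univ \ E) I G) (hE : MeasurableSet E)
    (hEfin : perimeter μ E univ < ⊤) (hEind : IsIndecomposableIn μ E univ) (hK : K ⊆ I) :
    IsIndecomposableIn μ (E ∪ ⋃ i ∈ K, G i) univ := by
  rw [IsIndecomposableIn, isDecomposableIn_univ_iff]
  rintro ⟨A, B, hAB, hU, hA, hB⟩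
  obtain hEA | hEB := hEind.measure_inter_eq_zero_or hE hEfin hAB (hU ▸ subset_union_left)
  · exact hA.ne' (h.measure_right_eq_zero_of_isPerimeterSplitting hP hE hEfin hK hAB.symm
      (union_comm A B ▸ hU) hB.ne' hEA)
  · exact hB.ne' (h.measure_right_eq_zero_of_isPerimeterSplitting hP hE hEfin hK hAB hU hA.ne' hEB)

end IsEssentialPartition

section Saturation

variable {μ : Measure X} [IsFiniteMeasureOnCompacts μ] {E : Set X} {I : Set ℕ} {G : ℕ → Set X}

theorem IsEssentialPartition.saturationOf_saturationOf
    [WeaklyLocallyCompactSpace X] [SigmaCompactSpace X]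
    (h : IsEssentialPartition μ (univ \ E) I G) (hEfin : perimeter μ E univ < ⊤) {J : Set ℕ}
    {H : ℕ → Set X} (h' : IsEssentialPartition μ (univ \ saturationOf μ E I G) J H) :
    saturationOf μ (saturationOf μ E I G) J H = saturationOf μ E I G := by
  refine union_eq_self_of_subset_right (iUnion₂_subset fun j ⟨hj, hjfin⟩ => ?_)
  obtain ⟨i, ⟨hi, hinf⟩, hle⟩ := h.exists_ae_le_of_union_biUnion hEfin
    (K := {i | i ∈ I ∧ μ (G i) < ⊤}) (sep_subset _ _) h' hj
  exact absurd ⟨hi, (measure_mono_ae hle).trans_lt hjfin⟩ hinf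

theorem saturation_indecomposable_and_saturated_general [ProperSpace X]
    (hP : SupportsPoincare μ) (hE : MeasurableSet E) (hEfin : perimeter μ E univ < ⊤)
    (hindec : IsIndecomposableIn μ E univ) (hdec : IsEssentialPartition μ (univ \ E) I G) :
    IsIndecomposableIn μ (saturationOf μ E I G) univ ∧
    ∀ (J : Set ℕ) (H : ℕ → Set X),
      IsEssentialPartition μ (univ \ saturationOf μ E I G) J H →
      saturationOf μ (saturationOf μ E I G) J H = saturationOf μ E I G :=
  ⟨hdec.isIndecomposableIn_union_biUnion hP hE hEfin hindec (sep_subset I fun i => μ (G i) < ⊤),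
    fun _ _ => hdec.saturationOf_saturationOf hEfin⟩

end Saturation

/-- **Proposition (ii).** In a PI space with `μ(X) = ∞`, the saturation of an
indecomposable set `E` is indecomposable and saturated; in particular
`sat(sat(E)) = sat(E)` (up to `μ`-measure zero). -/
theorem saturation_indecomposable_and_saturated
    [ProperSpace X] (μ : Measure X)
    (hball : ∀ (x : X) (r : ℝ), 0 < r → 0 < μ (ball x r) ∧ μ (ball x r) < ⊤)
    (hPI : IsPISpace μ) (hinf : μ Set.univ = ⊤)
    (E : Set X) (hE : MeasurableSet E) (hEfin : perimeter μ E Set.univ < ⊤)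
    (hindec : IsIndecomposableIn μ E Set.univ)
    (hcompfin : perimeter μ (Set.univ \ E) Set.univ < ⊤)
    (I : Set ℕ) (G : ℕ → Set X)
    (hdec : IsEssentialPartition μ (Set.univ \ E) I G) :
    IsIndecomposableIn μ (saturationOf μ E I G) Set.univ ∧
    ∀ (J : Set ℕ) (H : ℕ → Set X),
      IsEssentialPartition μ (Set.univ \ saturationOf μ E I G) J H →
      μ (symmDiff (saturationOf μ E I G)
          (saturationOf μ (saturationOf μ E I G) J H)) = 0 := by
  have : IsLocallyFiniteMeasure μ :=
    ⟨fun x => ⟨ball x 1, ball_mem_nhds x one_pos, (hball x 1 one_pos).2⟩⟩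
  obtain ⟨hsat, hsatsat⟩ :=
    saturation_indecomposable_and_saturated_general hPI.2.2 hE hEfin hindec hdec
  exact ⟨hsat, fun J H hJ => by rw [hsatsat J H hJ, symmDiff_self, bot_eq_empty, measure_empty]⟩
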